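/- Let ℓ, h, d, m ∈ ℕ with d ≥ 2ℓ, h ≥ 2ℓ+2 and m ≥ 2, and let G := G_{h,d,m}. For every set X of fewer than m vertices of G, there is a path P in G with one endvertex in S(G) and one endvertex in T(G) such that d_G(V(P), X ∪ {R(G)}) > ℓ. -/

import Mathlib

open SimpleGraph

namespace CGT

/-- Distance between two vertex sets, as an extended natural number. -/
noncomputable def sDist {V : Type*} (G : SimpleGraph V) (U U' : Set V) : ℕ∞ :=
  ⨅ (u : U) (v : U'), G.edist u.1 v.1

/-- The ball of radius `r` around a vertex set `U`. -/
def gBall {V : Type*} (G : SimpleGraph V) (U : Set V) (r : ℕ) : Set V :=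
  {v | ∃ u ∈ U, G.edist u v ≤ (r : ℕ∞)}

/-- A set of vertices is connected if the induced subgraph is connected. -/
def SetConn {V : Type*} (G : SimpleGraph V) (U : Set V) : Prop :=
  (G.induce U).Connected

/-- The vertex set of a walk. -/
def walkSupp {V : Type*} {G : SimpleGraph V} {a b : V} (p : G.Walk a b) : Set V :=
  {v | v ∈ p.support}

/-- `X` separates `Y` and `Z` in `G`: every path with one end in `Y` and one in `Z`
contains a vertex of `X`. -/
def Separates {V : Type*} (G : SimpleGraph V) (X Y Z : Set V) : Prop :=
  ∀ ⦃y z : V⦄, y ∈ Y → z ∈ Z → ∀ p : G.Walk y z, p.IsPath → ∃ x ∈ X, x ∈ p.support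

/-- `f` is an `(M,A)`-quasi-isometry from `G` to `H`.  The two-sided distance bound
`M⁻¹ d_G(u,v) - A ≤ d_H(f u, f v) ≤ M d_G(u,v) + A` is stated multiplied out over `ℕ∞`. -/
structure IsQI {V V' : Type*} (M A : ℕ) (G : SimpleGraph V) (H : SimpleGraph V')
    (f : V → V') : Prop where
  upper : ∀ u v : V, H.edist (f u) (f v) ≤ (M : ℕ∞) * G.edist u v + (A : ℕ∞)
  lower : ∀ u v : V, G.edist u v ≤ (M : ℕ∞) * H.edist (f u) (f v) + (M : ℕ∞) * (A : ℕ∞)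
  dense : ∀ w : V', ∃ v : V, H.edist w (f v) ≤ (A : ℕ∞)

/-- `G` is `(M,A)`-quasi-isometric to `H`. -/
def QIsometric {V V' : Type*} (M A : ℕ) (G : SimpleGraph V) (H : SimpleGraph V') : Prop :=
  ∃ f : V → V', IsQI M A G H f

/-- `X` is a minor of `G`. -/
def HasMinor {V W : Type*} (G : SimpleGraph V) (X : SimpleGraph W) : Prop :=
  ∃ U : W → Set V,
    (∀ x, (U x).Nonempty) ∧ (∀ x, SetConn G (U x)) ∧
    (∀ ⦃x y⦄, x ≠ y → Disjoint (U x) (U y)) ∧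
    ∀ ⦃x y⦄, X.Adj x y → ∃ u ∈ U x, ∃ v ∈ U y, G.Adj u v

/-- The `(a × b)`-grid graph. -/
def gridGraph (a b : ℕ) : SimpleGraph (Fin a × Fin b) :=
  SimpleGraph.fromRel (fun u v =>
    (u.1 = v.1 ∧ u.2.1 + 1 = v.2.1) ∨ (u.2 = v.2 ∧ u.1.1 + 1 = v.1.1))

/-- A `K`-fat model of `X` in `G`: disjoint connected branch sets joined by internally
disjoint branch paths, all pairwise at distance at least `K` except for a branch path and
the branch sets of its endpoints. -/
structure FatModel {V W : Type*} (G : SimpleGraph V) (X : SimpleGraph W) (K : ℕ) where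
  branch : W → Set V
  branch_nonempty : ∀ x, (branch x).Nonempty
  branch_connected : ∀ x, SetConn G (branch x)
  branch_disjoint : ∀ ⦃x y⦄, x ≠ y → Disjoint (branch x) (branch y)
  pathEnd : ∀ ⦃x y⦄, X.Adj x y → V
  path : ∀ ⦃x y⦄ (e : X.Adj x y), G.Walk (pathEnd e) (pathEnd e.symm)
  path_isPath : ∀ ⦃x y⦄ (e : X.Adj x y), (path e).IsPath
  path_symm : ∀ ⦃x y⦄ (e : X.Adj x y), path e.symm = (path e).reverse
  pathEnd_mem : ∀ ⦃x y⦄ (e : X.Adj x y), pathEnd e ∈ branch x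
  path_meets : ∀ ⦃x y⦄ (e : X.Adj x y) (z : W) (v : V), v ∈ (path e).support → v ∈ branch z →
    (z = x ∧ v = pathEnd e) ∨ (z = y ∧ v = pathEnd e.symm)
  path_int_disjoint : ∀ ⦃x y x' y'⦄ (e : X.Adj x y) (e' : X.Adj x' y'), s(x, y) ≠ s(x', y') →
    ∀ v, v ∈ (path e).support → v ∈ (path e').support → v = pathEnd e' ∨ v = pathEnd e'.symm
  fat_branch : ∀ ⦃x y⦄, x ≠ y → (K : ℕ∞) ≤ sDist G (branch x) (branch y)
  fat_path_branch : ∀ ⦃x y⦄ (e : X.Adj x y) (z : W), z ≠ x → z ≠ y →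
    (K : ℕ∞) ≤ sDist G (walkSupp (path e)) (branch z)
  fat_paths : ∀ ⦃x y x' y'⦄ (e : X.Adj x y) (e' : X.Adj x' y'), s(x, y) ≠ s(x', y') →
    (K : ℕ∞) ≤ sDist G (walkSupp (path e)) (walkSupp (path e'))

/-- `X` is a `K`-fat minor of `G`. -/
def IsFatMinor {V W : Type*} (G : SimpleGraph V) (X : SimpleGraph W) (K : ℕ) : Prop :=
  Nonempty (FatModel G X K)

/-- `W` is a `K`-fat `n`-path-connected set in `G`. -/
def FatPathConn {V : Type*} (G : SimpleGraph V) (K n : ℕ) (W : Set V) : Prop :=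
  (∃ S : Finset V, ↑S ⊆ W ∧ 2 * n ≤ S.card) ∧
  (∀ ⦃u v : V⦄, u ∈ W → v ∈ W → u ≠ v → (K : ℕ∞) ≤ G.edist u v) ∧
  ∀ l : ℕ, l ≤ n → ∀ A B : Finset V, ↑A ⊆ W → ↑B ⊆ W → A.card = l → B.card = l →
    ∃ (a b : Fin l → V) (P : ∀ i : Fin l, G.Walk (a i) (b i)),
      (∀ i, (P i).IsPath) ∧ (∀ i, a i ∈ A ∧ b i ∈ B) ∧
      ∀ i j, i ≠ j → (K : ℕ∞) ≤ sDist G (walkSupp (P i)) (walkSupp (P j))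

end CGT

namespace Ghdm

/-- Raw vertex codes for the graphs `G_{h,d,m}`:
`path k` is the `k`-th vertex of the base path; `tree j i p` is the vertex at position `p`
of the `i`-th binary tree at level `j` (the root being position `[]`); and
`spine j i k t e s` is the `s`-th internal vertex of the spine from the `k`-th leaf of that
tree to the `e`-th element of the `t`-th local gluing set at level `j-1`. -/
inductive Raw : Type where
  | path (k : ℕ)
  | tree (j i : ℕ) (p : List Bool)
  | spine (j i k t e s : ℕ)
deriving DecidableEq

/-- `N = 2^{h+1} - 1`, the number of copies of `G_{h,d,m-1}` glued inside `G_{h,d,m}`. -/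
def NN (h : ℕ) : ℕ := 2 ^ (h + 1) - 1

/-- Canonical representative of a raw vertex code: all tree roots are identified with the
single root `tree m 1 []`, and the leftmost leaf of tree `i > 1` is identified with the
rightmost leaf of tree `i - 1` (consecutive copies are glued along these leaves). -/
def canon (h m : ℕ) : Raw → Raw
  | .tree j i p =>
    if p = [] then .tree m 1 []
    else if p = List.replicate h false ∧ 1 < i then .tree j (i - 1) (List.replicate h true)
    else .tree j i p
  | x => x

/-- The `q`-bit binary representation of `i` (most significant bit first);
`false` means "left". -/
def natToBits (q i : ℕ) : List Bool := (List.range q).map fun a => Nat.testBit i (q - 1 - a)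

/-- Position of the `k`-th leaf (1-based, from the left) in a binary tree of height `h`. -/
def leafPos (h k : ℕ) : List Bool := natToBits h (k - 1)

/-- The `e`-th element of the `g`-th gluing set `V^{jv}_g` (at level `jv`):
its element `e = 1` is an anchor of the base path, and its element `e ≥ 2` is a shared
extreme leaf of the trees at level `e`. -/
def VsetElem (h d jv g e : ℕ) : Raw :=
  if e = 1 then .path ((g - 1) * NN h ^ (jv - 1) * (d + 1))
  else if (g - 1) * NN h ^ (jv - e) = 0 then .tree e 1 (List.replicate h false)
  else .tree e ((g - 1) * NN h ^ (jv - e)) (List.replicate h true)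

/-- Valid (canonical) vertex codes of `G_{h,d,m}`. -/
def Valid (h d m : ℕ) : Raw → Prop
  | .path k => k ≤ (d + 1) * NN h ^ (m - 1)
  | .tree j i p => 2 ≤ j ∧ j ≤ m ∧ 1 ≤ i ∧ i ≤ NN h ^ (m - j) ∧ p.length ≤ h ∧
      (p = [] → j = m ∧ i = 1) ∧ (p = List.replicate h false → p ≠ [] → i = 1)
  | .spine j i k t e s => 2 ≤ j ∧ j ≤ m ∧ 1 ≤ i ∧ i ≤ NN h ^ (m - j) ∧
      1 ≤ k ∧ k ≤ 2 ^ h ∧ (t = 2 * k - 2 ∨ t = 2 * k + 1) ∧ 1 ≤ t ∧ t ≤ 2 ^ (h + 1) ∧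
      1 ≤ e ∧ e ≤ j - 1 ∧ 1 ≤ s ∧ s ≤ d

/-- Generating adjacencies between raw vertex codes: consecutive base path vertices,
parent/child in the binary trees, consecutive spine vertices, a spine and the leaf it
starts at, a spine and the gluing-set vertex it ends at (the latter collapsed to a single
edge when `d = 0`). -/
inductive rawAdj (h d : ℕ) : Raw → Raw → Prop
  | base (k : ℕ) : rawAdj h d (.path k) (.path (k + 1))
  | child (j i : ℕ) (p : List Bool) (b : Bool) : p.length < h →
      rawAdj h d (.tree j i p) (.tree j i (p ++ [b]))
  | step (j i k t e s : ℕ) : rawAdj h d (.spine j i k t e s) (.spine j i k t e (s + 1))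
  | toLeaf (j i k t e : ℕ) : rawAdj h d (.tree j i (leafPos h k)) (.spine j i k t e 1)
  | toV (j i k t e : ℕ) :
      rawAdj h d (.spine j i k t e d) (VsetElem h d (j - 1) ((i - 1) * NN h + t) e)
  | short (j i k t e : ℕ) : d = 0 → 1 ≤ k → k ≤ 2 ^ h → (t = 2 * k - 2 ∨ t = 2 * k + 1) →
      1 ≤ t → t ≤ 2 ^ (h + 1) → 1 ≤ e → e ≤ j - 1 →
      rawAdj h d (.tree j i (leafPos h k)) (VsetElem h d (j - 1) ((i - 1) * NN h + t) e)

/-- Adjacency of canonical representatives. -/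
def rel (h d m : ℕ) (x y : Raw) : Prop :=
  ∃ a b, rawAdj h d a b ∧ x = canon h m a ∧ y = canon h m b

/-- The vertex set of `G_{h,d,m}`. -/
def Verts (h d m : ℕ) : Set Raw := {x | Valid h d m x}

/-- The graph `G_{h,d,m}`. -/
def G (h d m : ℕ) : SimpleGraph (Verts h d m) :=
  (SimpleGraph.fromRel (rel h d m)).induce (Verts h d m)

/-- Lift a set of raw codes to a set of vertices of `G_{h,d,m}`. -/
def lift {h d m : ℕ} (S : Set Raw) : Set (Verts h d m) := Subtype.val ⁻¹' S

/-- The root `R(G_{h,d,m})`. -/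
def RootR (m : ℕ) : Raw := .tree m 1 []

/-- The gluing set `V^{jv}_g` of `G_{h,d,m}`, as a set of raw codes. -/
def VsetRaw (h d m jv g : ℕ) : Set Raw :=
  {x | ∃ e, 1 ≤ e ∧ e ≤ jv ∧ x = canon h m (VsetElem h d jv g e)}

/-- The set `S(G_{h,d,m})`. -/
def SsetR (h d m : ℕ) : Set Raw :=
  VsetRaw h d m (m - 1) 1 ∪ {canon h m (.tree m 1 (leafPos h 1))}

/-- The set `T(G_{h,d,m})`. -/
def TsetR (h d m : ℕ) : Set Raw :=
  VsetRaw h d m (m - 1) (2 ^ (h + 1)) ∪ {canon h m (.tree m 1 (leafPos h (2 ^ h)))}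

/-- For a vertex of the top binary tree at position `p`, the (1-based) index of the
leftmost leaf of the top tree below it. -/
def kOf (h : ℕ) (p : List Bool) : ℕ :=
  (p.foldl (fun a b => 2 * a + if b then 1 else 0) 0) * 2 ^ (h - p.length) + 1

/-- `S(Δ(x))` for the vertex `x` of the top binary tree `B(G_{h,d,m})` at position `p`. -/
def SDeltaR (h d m : ℕ) (p : List Bool) : Set Raw :=
  VsetRaw h d m (m - 1) (2 * kOf h p - 1) ∪ {canon h m (.tree m 1 (leafPos h (kOf h p)))}

/-- The leaf of `B(G_{h,d,m})` immediately to the left of the leftmost leaf below the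
top-tree vertex at position `p`; it is the unique leaf joined by spines to `S(Δ(x))`. -/
def leafLeftR (h m : ℕ) (p : List Bool) : Raw :=
  canon h m (.tree m 1 (leafPos h (kOf h p - 1)))

end Ghdm

/-!
A set `U` of codes is kept at distance more than `2ℓ` from a set `W` by a potential that is `d + 1`
on `U`, `0` on `W` and changes by at most one along every edge not incident with the root; as
`h > 2ℓ`, short walks between leaves avoid the root.  Two such potentials suffice: one reads off
the level of a tree, the other the position along the base path.

The path is found by induction on the level `n`, for a run of consecutive copies of `G_{h,d,n+1}`
near which there are at most `n` elements of `X`.  If this bound also drops by one for the copies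
one level below, the induction hypothesis applies to them directly.  Otherwise all these elements
of `X` are close to the lower level, and the level potential keeps them away from the leaves above
it.  Take the first lower copy up to which all of them have occurred.  The induction hypothesis
crosses the copies before it and, by the position potential, also those from two copies after it
on, while some leaf has spines to both sides of the gap of two copies.
-/

namespace CGT

variable {V : Type*} {G : SimpleGraph V}

lemma gBall_mono {U W : Set V} (hUW : U ⊆ W) (r : ℕ) : gBall G U r ⊆ gBall G W r :=
  fun _ ⟨u, hu, huv⟩ => ⟨u, hUW hu, huv⟩

lemma mem_gBall_of_walk {U : Set V} {r : ℕ} {u v : V} (hu : u ∈ U) (p : G.Walk u v)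
    (hp : p.length ≤ r) : v ∈ gBall G U r :=
  ⟨u, hu, (edist_le p).trans (by exact_mod_cast hp)⟩

lemma exists_walk_length_le_of_edist_le {u v : V} {r : ℕ} (huv : G.edist u v ≤ r) :
    ∃ p : G.Walk u v, p.length ≤ r := by
  obtain ⟨p, hp⟩ := exists_walk_of_edist_ne_top (ne_top_of_le_ne_top (ENat.natCast_ne_top r) huv)
  exact ⟨p, by exact_mod_cast hp.trans_le huv⟩

lemma natCast_lt_sDist_iff_disjoint_gBall {U W : Set V} {r : ℕ} :
    (r : ℕ∞) < sDist G U W ↔ Disjoint U (gBall G W r) := by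
  simp only [← ENat.add_one_le_iff (ENat.natCast_ne_top r), sDist, le_iInf_iff, Subtype.forall,
    Set.disjoint_left, gBall, Set.mem_ofPred_eq, not_exists, not_and]
  simp only [ENat.add_one_le_iff (ENat.natCast_ne_top r), not_le, edist_comm]

/-- A walk from `x` to a point on the other side of the boundary of `S` meets `C`. -/
lemma gBall_inter_gBall_compl_subset {S C : Set V}
    (hSC : ∀ a ∈ S, ∀ b, G.Adj a b → b ∈ S ∨ b ∈ C) (r : ℕ) :
    gBall G S r ∩ gBall G Sᶜ r ⊆ gBall G C r := by
  classical
  rintro x ⟨⟨u, hu, hux⟩, ⟨w, hw, hwx⟩⟩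
  by_cases hx : x ∈ S
  · obtain ⟨p, hp⟩ := exists_walk_length_le_of_edist_le (edist_comm.trans_le hwx)
    obtain ⟨e, he, heS, heS'⟩ := p.exists_boundary_dart S hx hw
    have hsupp := p.dart_snd_mem_support_of_mem_darts he
    refine mem_gBall_of_walk ((hSC _ heS _ e.adj).resolve_left heS')
      (p.takeUntil _ hsupp).reverse ?_
    rw [Walk.length_reverse]
    exact (p.length_takeUntil_le_length hsupp).trans hp
  · obtain ⟨p, hp⟩ := exists_walk_length_le_of_edist_le hux
    obtain ⟨e, he, heS, heS'⟩ := p.exists_boundary_dart S hu hx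
    have hsupp := p.dart_snd_mem_support_of_mem_darts he
    exact mem_gBall_of_walk ((hSC _ heS _ e.adj).resolve_left heS') (p.dropUntil _ hsupp)
      ((p.length_dropUntil_le_length hsupp).trans hp)

lemma le_add_length_of_forall_adj {f : V → ℤ} {u v : V} (p : G.Walk u v)
    (hf : ∀ a ∈ p.support, ∀ b ∈ p.support, G.Adj a b → f a ≤ f b + 1) :
    f u ≤ f v + p.length := by
  induction p with
  | nil => simp
  | cons huv p ih =>
    have hstep := hf _ (by simp) _ (by simp) huv
    have htail := ih fun a ha b hb => hf a (by simp [ha]) b (by simp [hb])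
    rw [Walk.length_cons]
    push_cast
    omega

end CGT

namespace Ghdm

section Codes

lemma NN_add_one (h : ℕ) : NN h + 1 = 2 ^ (h + 1) :=
  Nat.sub_add_cancel Nat.one_le_two_pow

lemma NN_pos (h : ℕ) : 0 < NN h := by
  have := Nat.one_lt_two_pow (Nat.succ_ne_zero h)
  have := NN_add_one h
  omega

lemma length_leafPos (h k : ℕ) : (leafPos h k).length = h := by
  simp [leafPos, natToBits]

lemma leafPos_one (h : ℕ) : leafPos h 1 = List.replicate h false := by
  apply List.ext_getElem <;> simp [leafPos, natToBits]

lemma leafPos_two_pow (h : ℕ) : leafPos h (2 ^ h) = List.replicate h true := by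
  apply List.ext_getElem
  · simp [leafPos, natToBits]
  · intro i _ hi
    rw [List.length_replicate] at hi
    simp only [leafPos, natToBits, List.getElem_map, List.getElem_range, List.getElem_replicate,
      Nat.testBit_two_pow_sub_one, decide_eq_true_eq]
    omega

lemma leafPos_ne_nil {h : ℕ} (hh : 0 < h) (k : ℕ) : leafPos h k ≠ [] := by
  rw [← List.length_pos_iff, length_leafPos]
  exact hh

lemma replicate_true_ne_replicate_false {h : ℕ} (hh : 0 < h) :
    List.replicate h true ≠ List.replicate h false := by
  simp [List.replicate_inj, hh.ne']

/-- The `k`-th leaf of the `i`-th binary tree at level `j`, as a canonical code. -/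
def leaf (h m j i k : ℕ) : Raw := canon h m (.tree j i (leafPos h k))

lemma leaf_eq {h : ℕ} (hh : 0 < h) (m j i k : ℕ) :
    leaf h m j i k = if leafPos h k = List.replicate h false ∧ 1 < i
      then .tree j (i - 1) (List.replicate h true) else .tree j i (leafPos h k) :=
  if_neg (leafPos_ne_nil hh k)

lemma leaf_two_pow {h : ℕ} (hh : 0 < h) (m j i : ℕ) :
    leaf h m j i (2 ^ h) = .tree j i (List.replicate h true) := by
  simp [leaf_eq hh, leafPos_two_pow, replicate_true_ne_replicate_false hh]

lemma leaf_succ_one {h i : ℕ} (hh : 0 < h) (hi : 0 < i) (m j : ℕ) :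
    leaf h m j (i + 1) 1 = leaf h m j i (2 ^ h) := by
  simp [leaf_two_pow hh, leaf_eq hh, leafPos_one, hi]

lemma canon_leaf {h : ℕ} (hh : 0 < h) (m j i k : ℕ) :
    canon h m (leaf h m j i k) = leaf h m j i k := by
  rw [leaf_eq hh]
  split_ifs with hglued
  · rw [← leafPos_two_pow, ← leaf, leaf_two_pow hh, leafPos_two_pow]
  · exact (leaf_eq hh m j i k).trans (if_neg hglued)

lemma valid_leaf {h d m j i : ℕ} (hh : 0 < h) (hj : 2 ≤ j) (hjm : j ≤ m)
    (hi : i < NN h ^ (m - j)) (k : ℕ) : Valid h d m (leaf h m j (i + 1) k) := by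
  rw [leaf_eq hh]
  split_ifs with hglued
  · have hne : List.replicate h true ≠ [] := by simp [hh.ne']
    exact ⟨hj, hjm, by omega, by omega, by simp, fun hnil => absurd hnil hne,
      fun heq _ => absurd heq (replicate_true_ne_replicate_false hh)⟩
  · exact ⟨hj, hjm, by omega, hi, (length_leafPos h k).le,
      fun hnil => absurd hnil (leafPos_ne_nil hh k), fun heq _ => by grind⟩

lemma VsetElem_one (h d q g : ℕ) :
    VsetElem h d q g 1 = .path ((g - 1) * NN h ^ (q - 1) * (d + 1)) := rfl

/-- The case distinction in `VsetElem` is the gluing of leaves in `canon`. -/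
lemma VsetElem_eq_leaf {h e : ℕ} (hh : 0 < h) (he : e ≠ 1) (d m q g : ℕ) :
    VsetElem h d q g e = leaf h m e ((g - 1) * NN h ^ (q - e) + 1) 1 := by
  rw [VsetElem, if_neg he, leaf_eq hh, leafPos_one]
  split_ifs <;> grind

lemma canon_VsetElem {h : ℕ} (hh : 0 < h) (d m q g e : ℕ) :
    canon h m (VsetElem h d q g e) = VsetElem h d q g e := by
  rcases eq_or_ne e 1 with rfl | he
  · rfl
  · rw [VsetElem_eq_leaf hh he d m, canon_leaf hh]

lemma VsetElem_succ_level {h n e : ℕ} (hh : 0 < h) (hen : e ≤ n + 1) (d A : ℕ) :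
    VsetElem h d (n + 2) (A + 1) e = VsetElem h d (n + 1) (A * NN h + 1) e := by
  rcases eq_or_ne e 1 with rfl | he
  · simp only [VsetElem_one, Nat.add_sub_cancel, Nat.add_succ_sub_one, pow_succ']
    congr 2
    ring
  · rw [VsetElem_eq_leaf hh he d 0, VsetElem_eq_leaf hh he d 0,
      Nat.succ_sub hen]
    simp only [Nat.add_sub_cancel, pow_succ', mul_assoc]

lemma mem_VsetRaw {h d m q g : ℕ} (hh : 0 < h) {x : Raw} :
    x ∈ VsetRaw h d m q g ↔ ∃ e, 1 ≤ e ∧ e ≤ q ∧ x = VsetElem h d q g e := by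
  simp only [VsetRaw, Set.mem_ofPred_eq, canon_VsetElem hh]

lemma VsetRaw_succ_level {h : ℕ} (hh : 0 < h) (d m n A : ℕ) :
    VsetRaw h d m (n + 2) (A + 1) =
      VsetRaw h d m (n + 1) (A * NN h + 1) ∪ {leaf h m (n + 2) (A + 1) 1} := by
  ext x
  have htop : VsetElem h d (n + 2) (A + 1) (n + 2) = leaf h m (n + 2) (A + 1) 1 := by
    simp [VsetElem_eq_leaf hh (show n + 2 ≠ 1 by omega) d m]
  rw [Set.mem_union, mem_VsetRaw hh, mem_VsetRaw hh, Set.mem_singleton_iff, ← htop]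
  constructor
  · rintro ⟨e, he, hen, rfl⟩
    rcases hen.eq_or_lt with rfl | hlt
    · exact .inr rfl
    · exact .inl ⟨e, he, by omega, VsetElem_succ_level hh (by omega) d A⟩
  · rintro (⟨e, he, hen, rfl⟩ | rfl)
    · exact ⟨e, he, by omega, (VsetElem_succ_level hh hen d A).symm⟩
    · exact ⟨n + 2, by omega, le_rfl, rfl⟩

lemma SsetR_eq_VsetRaw {h : ℕ} (hh : 0 < h) (d n : ℕ) :
    SsetR h d (n + 2) = VsetRaw h d (n + 2) (n + 2) 1 := by
  have := VsetRaw_succ_level hh d (n + 2) n 0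
  rw [zero_mul, zero_add] at this
  exact this.symm

lemma TsetR_eq_VsetRaw {h : ℕ} (hh : 0 < h) (d n : ℕ) :
    TsetR h d (n + 2) = VsetRaw h d (n + 2) (n + 2) 2 := by
  have := VsetRaw_succ_level hh d (n + 2) n 1
  rw [one_mul, NN_add_one, leaf_succ_one hh one_pos] at this
  exact this.symm

/-- The pairs `(k, t)` such that the leaf `ℓ_k` of a tree has spines to the local gluing set
`V_t`. -/
structure IsSpinePair (h k t : ℕ) : Prop where
  one_le_leaf : 1 ≤ k
  leaf_le : k ≤ 2 ^ h
  target_eq : t = 2 * k - 2 ∨ t = 2 * k + 1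
  one_le_target : 1 ≤ t
  target_le : t ≤ 2 ^ (h + 1)

lemma canon_eq_spine_iff {h m j i k t e s : ℕ} {x : Raw} :
    canon h m x = .spine j i k t e s ↔ x = .spine j i k t e s := by
  cases x with
  | path => simp [canon]
  | tree => simp only [canon]; split_ifs <;> simp
  | spine => rfl

lemma VsetElem_ne_spine {h d q g e' j i k t e s : ℕ} :
    VsetElem h d q g e' ≠ .spine j i k t e s := by
  unfold VsetElem
  split_ifs <;> simp

end Codes

section Potentials

variable {h d m l : ℕ}

/-- The distance of a vertex to the root along its tree, cut off at `h`: codes outside the trees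
have the depth of a leaf. -/
def depth (h : ℕ) : Raw → ℤ
  | .tree _ _ p => p.length
  | _ => h

lemma depth_canon (h m : ℕ) (x : Raw) : depth h (canon h m x) = depth h x := by
  cases x with
  | tree j i p => simp only [canon]; split_ifs <;> simp_all [depth]
  | _ => rfl

lemma depth_leaf (h m j i k : ℕ) : depth h (leaf h m j i k) = h := by
  rw [leaf, depth_canon, depth, length_leafPos]

lemma depth_VsetElem (hh : 0 < h) (d q g e : ℕ) : depth h (VsetElem h d q g e) = h := by
  rcases eq_or_ne e 1 with rfl | he
  · rfl
  · rw [VsetElem_eq_leaf hh he d 0, depth_leaf]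

lemma abs_depth_sub_le_of_rawAdj (hh : 0 < h) {x y : Raw} (hxy : rawAdj h d x y) :
    |depth h x - depth h y| ≤ 1 := by
  cases hxy with
  | toV | short => rw [depth_VsetElem hh]; simp [depth, length_leafPos]
  | _ => simp [depth, length_leafPos]

lemma adj_iff {u v : Verts h d m} :
    (G h d m).Adj u v ↔ u.1 ≠ v.1 ∧ (rel h d m u.1 v.1 ∨ rel h d m v.1 u.1) := by
  rw [G, induce_adj, fromRel_adj]

lemma depth_le_of_adj (hh : 0 < h) {u v : Verts h d m} (huv : (G h d m).Adj u v) :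
    depth h u.1 ≤ depth h v.1 + 1 := by
  rcases (adj_iff.1 huv).2 with ⟨x, y, hxy, hu, hv⟩ | ⟨x, y, hxy, hv, hu⟩ <;>
    rw [hu, hv, depth_canon, depth_canon] <;>
    linarith [abs_le.1 (abs_depth_sub_le_of_rawAdj hh hxy)]

lemma depth_le_add_length (hh : 0 < h) {u v : Verts h d m} (p : (G h d m).Walk u v) :
    depth h u.1 ≤ depth h v.1 + p.length :=
  CGT.le_add_length_of_forall_adj p (f := fun w => depth h w.1)
    fun _ _ _ _ hab => depth_le_of_adj hh hab

/-- Integer labels of the base path and the trees which respect the gluing of leaves, are constant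
on every tree minus its root and change by at most one along the base path.  The values at spines
are irrelevant; as all others lie in `[0, d + 1]`, the labels can be interpolated along spines, see
`extendPotential`. -/
structure IsPotential (h d : ℕ) (φ : Raw → ℤ) : Prop where
  nonneg : ∀ x, 0 ≤ φ x
  le : ∀ x, φ x ≤ d + 1
  path_step : ∀ k, |φ (.path k) - φ (.path (k + 1))| ≤ 1
  tree_child : ∀ j i p b, p ≠ [] → φ (.tree j i (p ++ [b])) = φ (.tree j i p)
  glue : ∀ j i, 1 < i →
    φ (.tree j (i - 1) (List.replicate h true)) = φ (.tree j i (List.replicate h false))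

/-- The interpolation of a potential along spines: the value at the `s`-th vertex of a spine is the
value at its far end, clamped to within `s` of the value at its leaf. -/
def extendPotential (h d : ℕ) (φ : Raw → ℤ) : Raw → ℤ
  | .spine j i k t e s =>
      max (φ (.tree j i (leafPos h k)) - s) (min (φ (.tree j i (leafPos h k)) + s)
        (φ (VsetElem h d (j - 1) ((i - 1) * NN h + t) e)))
  | x => φ x

lemma extendPotential_VsetElem (φ : Raw → ℤ) (q g e : ℕ) :
    extendPotential h d φ (VsetElem h d q g e) = φ (VsetElem h d q g e) := by
  unfold VsetElem
  split_ifs <;> rfl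

lemma extendPotential_spine_of_eq {φ : Raw → ℤ} {j i k t e : ℕ} {c : ℤ}
    (hleaf : φ (.tree j i (leafPos h k)) = c)
    (hend : φ (VsetElem h d (j - 1) ((i - 1) * NN h + t) e) = c) (s : ℕ) :
    extendPotential h d φ (.spine j i k t e s) = c := by
  rw [extendPotential, hleaf, hend]
  omega

namespace IsPotential

variable {φ : Raw → ℤ}

lemma extendPotential_canon (hφ : IsPotential h d φ) {x : Raw} (hx : 0 < depth h x) (m : ℕ) :
    extendPotential h d φ (canon h m x) = extendPotential h d φ x := by
  cases x with
  | tree j i p =>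
    simp only [canon]
    split_ifs with hroot hglued
    · simp [hroot, depth] at hx
    · rw [hglued.1]
      exact hφ.glue j i hglued.2
    · rfl
  | _ => rfl

lemma extendPotential_leaf (hφ : IsPotential h d φ) (hh : 0 < h) (m j i k : ℕ) :
    extendPotential h d φ (leaf h m j i k) = φ (.tree j i (leafPos h k)) :=
  hφ.extendPotential_canon (by simpa [depth, length_leafPos] using hh) m

lemma apply_VsetElem (hφ : IsPotential h d φ) (hh : 0 < h) {q g e : ℕ} (he : e ≠ 1) :
    φ (VsetElem h d q g e) = φ (.tree e ((g - 1) * NN h ^ (q - e) + 1) (leafPos h 1)) := by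
  rw [← extendPotential_VsetElem φ, VsetElem_eq_leaf hh he d 0, hφ.extendPotential_leaf hh]

lemma abs_extendPotential_sub_le_of_rawAdj (hφ : IsPotential h d φ) {x y : Raw}
    (hxy : rawAdj h d x y) (hx : 0 < depth h x) :
    |extendPotential h d φ x - extendPotential h d φ y| ≤ 1 := by
  cases hxy with
  | base k => exact hφ.path_step k
  | child j i p b =>
    have hp : p ≠ [] := by rintro rfl; simp [depth] at hx
    simp [extendPotential, hφ.tree_child j i p b hp]
  | step | toLeaf =>
    simp only [extendPotential, abs_le]
    push_cast
    omega
  | toV j i k t e | short j i k t e =>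
    rw [extendPotential_VsetElem]
    simp only [extendPotential, abs_le]
    have := hφ.nonneg (.tree j i (leafPos h k))
    have := hφ.le (.tree j i (leafPos h k))
    have := hφ.nonneg (VsetElem h d (j - 1) ((i - 1) * NN h + t) e)
    have := hφ.le (VsetElem h d (j - 1) ((i - 1) * NN h + t) e)
    omega

lemma extendPotential_le_of_adj (hφ : IsPotential h d φ) {u v : Verts h d m}
    (huv : (G h d m).Adj u v) (hu : 0 < depth h u.1) (hv : 0 < depth h v.1) :
    extendPotential h d φ u.1 ≤ extendPotential h d φ v.1 + 1 := by
  rcases (adj_iff.1 huv).2 with ⟨x, y, hxy, hux, hvy⟩ | ⟨y, x, hyx, hvy, hux⟩ <;>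
    rw [hux, depth_canon] at hu <;> rw [hvy, depth_canon] at hv <;>
    rw [hux, hvy, hφ.extendPotential_canon hu, hφ.extendPotential_canon hv]
  · linarith [abs_le.1 (hφ.abs_extendPotential_sub_le_of_rawAdj hxy hu)]
  · linarith [abs_le.1 (hφ.abs_extendPotential_sub_le_of_rawAdj hyx hv)]

lemma extendPotential_le_add_length (hφ : IsPotential h d φ) (hh : 0 < h) {u v : Verts h d m}
    (p : (G h d m).Walk u v) (hp : p.length < depth h u.1) :
    extendPotential h d φ u.1 ≤ extendPotential h d φ v.1 + p.length := by
  classical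
  have hpos : ∀ w ∈ p.support, 0 < depth h w.1 := by
    intro w hw
    have := depth_le_add_length hh (p.takeUntil w hw)
    have := p.length_takeUntil_le_length hw
    omega
  exact CGT.le_add_length_of_forall_adj p (f := fun w => extendPotential h d φ w.1)
    fun a ha b hb hab => hφ.extendPotential_le_of_adj hab (hpos a ha) (hpos b hb)

lemma disjoint_gBall (hφ : IsPotential h d φ) (hd : 2 * l ≤ d) (hh : 2 * l < h) {U W : Set Raw}
    (hdepth : ∀ x ∈ U, depth h x = h) (hU : ∀ x ∈ U, extendPotential h d φ x = d + 1)
    (hW : ∀ x ∈ W, extendPotential h d φ x = 0) :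
    Disjoint (CGT.gBall (G h d m) (lift U) l) (CGT.gBall (G h d m) (lift W) l) := by
  rw [Set.disjoint_left]
  rintro x ⟨u, hu, hux⟩ ⟨w, hw, hwx⟩
  obtain ⟨p, hp⟩ := CGT.exists_walk_length_le_of_edist_le hux
  obtain ⟨q, hq⟩ := CGT.exists_walk_length_le_of_edist_le hwx
  have hlen : (p.append q.reverse).length ≤ 2 * l := by
    rw [Walk.length_append, Walk.length_reverse]
    omega
  have := hφ.extendPotential_le_add_length (by omega) (p.append q.reverse)
    (by rw [hdepth _ hu]; omega)
  rw [hU _ hu, hW _ hw] at this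
  omega

end IsPotential

/-- The potential separating the trees at levels at least `J` from everything below. -/
def levelPotential (d J : ℕ) : Raw → ℤ
  | .tree j _ _ => if J ≤ j then d + 1 else 0
  | _ => 0

lemma isPotential_levelPotential (h d J : ℕ) : IsPotential h d (levelPotential d J) where
  nonneg := by rintro (_ | _ | _) <;> simp only [levelPotential] <;> omega
  le := by rintro (_ | _ | _) <;> simp only [levelPotential] <;> omega
  path_step := by simp [levelPotential]
  tree_child := by simp [levelPotential]
  glue := by simp [levelPotential]

lemma levelPotential_VsetElem_eq_zero (hh : 0 < h) {J e : ℕ} (hJ : e < J) (d q g : ℕ) :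
    levelPotential d J (VsetElem h d q g e) = 0 := by
  rcases eq_or_ne e 1 with rfl | he
  · rfl
  · rw [(isPotential_levelPotential h d J).apply_VsetElem hh he]
    exact if_neg hJ.not_ge

/-- The potential separating what lies to the left of the `c`-th anchor (counted from `0`) of the
base path from what lies to the right of the next one.  Below the root, the two halves of the
`i`-th tree at level `j` are placed at the two ends of its copy, which are the anchors
`(i - 1) * NN h ^ (j - 1)` and `i * NN h ^ (j - 1)`. -/
def positionPotential (h d c : ℕ) : Raw → ℤ
  | .tree j i p =>
      if c < (i - 1 + if p.head? = some true then 1 else 0) * NN h ^ (j - 1) then d + 1 else 0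
  | .path k => max 0 (min (d + 1) (k - c * (d + 1)))
  | _ => 0

lemma isPotential_positionPotential (hh : 0 < h) (d c : ℕ) :
    IsPotential h d (positionPotential h d c) where
  nonneg := by rintro (_ | _ | _) <;> simp only [positionPotential] <;> omega
  le := by rintro (_ | _ | _) <;> simp only [positionPotential] <;> omega
  path_step k := by
    simp only [positionPotential, abs_le]
    push_cast
    omega
  tree_child j i p b hp := by
    simp only [positionPotential, List.head?_append_of_ne_nil p hp]
  glue j i hi := by
    simp [positionPotential, List.head?_replicate, hh.ne',
      Nat.sub_add_cancel (Nat.le_sub_one_of_lt hi)]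

lemma positionPotential_path_eq_zero {c k : ℕ} (hk : k ≤ c * (d + 1)) :
    positionPotential h d c (.path k) = 0 := by
  simp only [positionPotential]
  have : (k : ℤ) ≤ c * (d + 1) := by exact_mod_cast hk
  omega

lemma positionPotential_path_eq {c k : ℕ} (hk : (c + 1) * (d + 1) ≤ k) :
    positionPotential h d c (.path k) = d + 1 := by
  simp only [positionPotential]
  have : (c : ℤ) * (d + 1) + (d + 1) ≤ k := by
    rw [← add_one_mul]
    exact_mod_cast hk
  omega

lemma positionPotential_tree_eq_zero {c j i : ℕ} (hi : (i + 1) * NN h ^ (j - 1) ≤ c)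
    (p : List Bool) : positionPotential h d c (.tree j (i + 1) p) = 0 := by
  refine if_neg (not_lt.2 (le_trans (Nat.mul_le_mul_right _ ?_) hi))
  split_ifs <;> omega

lemma positionPotential_tree_eq {c j i : ℕ} (hi : c < i * NN h ^ (j - 1)) (p : List Bool) :
    positionPotential h d c (.tree j (i + 1) p) = d + 1 :=
  if_pos (hi.trans_le (Nat.mul_le_mul_right _ (by omega)))

lemma positionPotential_VsetElem (hh : 0 < h) {q e : ℕ} (he : 1 ≤ e) (heq : e ≤ q) (c g : ℕ) :
    positionPotential h d c (VsetElem h d q g e) =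
      if c < (g - 1) * NN h ^ (q - 1) then (d + 1 : ℤ) else 0 := by
  rcases eq_or_ne e 1 with rfl | he'
  · rw [VsetElem_one]
    split_ifs with hc
    · exact positionPotential_path_eq (Nat.mul_le_mul_right _ hc)
    · exact positionPotential_path_eq_zero (Nat.mul_le_mul_right _ (not_lt.1 hc))
  · have hpow : NN h ^ (q - 1) = NN h ^ (q - e) * NN h ^ (e - 1) := by
      rw [← pow_add]
      congr 1
      omega
    rw [(isPotential_positionPotential hh d c).apply_VsetElem hh he', leafPos_one, hpow]
    simp [positionPotential, List.head?_replicate, hh.ne', mul_assoc]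

end Potentials

section Strips

variable {h d m n l a b : ℕ}

/-- The `(i + 1)`-st copy of `G_{h,d,j}` has level at most `n + 1` and lies over the stretch of the
base path between the anchors `a` and `b`, which are counted from `0`. -/
structure IsCopyOver (h n a b j i : ℕ) : Prop where
  two_le : 2 ≤ j
  le_succ : j ≤ n + 1
  left_le : a ≤ i * NN h ^ (j - 1)
  le_right : (i + 1) * NN h ^ (j - 1) ≤ b

lemma IsCopyOver.mono {n' a' b' j i : ℕ} (hcopy : IsCopyOver h n a b j i) (hn : n ≤ n')
    (ha : a' ≤ a) (hb : b ≤ b') : IsCopyOver h n' a' b' j i :=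
  ⟨hcopy.two_le, hcopy.le_succ.trans (by omega), ha.trans hcopy.left_le, hcopy.le_right.trans hb⟩

lemma isCopyOver_top {A B i : ℕ} (hA : A ≤ i) (hB : i < B) :
    IsCopyOver h (n + 1) (A * NN h ^ (n + 1)) (B * NN h ^ (n + 1)) (n + 2) i :=
  ⟨by omega, le_rfl, Nat.mul_le_mul_right _ hA, Nat.mul_le_mul_right _ hB⟩

lemma IsCopyOver.lt_pow {j i : ℕ} (hcopy : IsCopyOver h n a b j i) (hjm : j ≤ m)
    (hb : b ≤ NN h ^ (m - 1)) : i < NN h ^ (m - j) := by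
  have hpow : NN h ^ (m - 1) = NN h ^ (m - j) * NN h ^ (j - 1) := by
    rw [← pow_add]
    congr 1
    have := hcopy.two_le
    omega
  exact Nat.le_of_mul_le_mul_right ((hcopy.le_right.trans hb).trans_eq hpow)
    (pow_pos (NN_pos h) _)

lemma IsCopyOver.le_target {j i t : ℕ} (hcopy : IsCopyOver h n a b j i) (ht : 1 ≤ t) :
    a ≤ (i * NN h + t - 1) * NN h ^ (j - 1 - 1) := by
  obtain ⟨q, rfl⟩ := Nat.exists_eq_add_of_le' hcopy.two_le
  calc a ≤ i * NN h ^ (q + 1) := hcopy.left_le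
    _ = i * NN h * NN h ^ q := by rw [pow_succ', mul_assoc]
    _ ≤ _ := Nat.mul_le_mul_right _ (by omega)

lemma IsCopyOver.target_le {j i t : ℕ} (hcopy : IsCopyOver h n a b j i) (ht : t ≤ 2 ^ (h + 1)) :
    (i * NN h + t - 1) * NN h ^ (j - 1 - 1) ≤ b := by
  obtain ⟨q, rfl⟩ := Nat.exists_eq_add_of_le' hcopy.two_le
  have := NN_add_one h
  calc (i * NN h + t - 1) * NN h ^ q ≤ (i * NN h + NN h) * NN h ^ q :=
        Nat.mul_le_mul_right _ (by omega)
    _ = (i + 1) * NN h ^ (q + 1) := by ring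
    _ ≤ b := hcopy.le_right

/-- The codes of the base path between the anchors `a` and `b`, and of the leaves and spines of
the copies of level at most `n + 1` over this stretch. -/
inductive InStrip (h d m n a b : ℕ) : Raw → Prop
  | path (k : ℕ) (left_le : a * (d + 1) ≤ k) (le_right : k ≤ b * (d + 1)) :
      InStrip h d m n a b (.path k)
  | leaf (j i k : ℕ) (isCopyOver : IsCopyOver h n a b j i) :
      InStrip h d m n a b (leaf h m j (i + 1) k)
  | spine (j i k t e s : ℕ) (isCopyOver : IsCopyOver h n a b j i) (one_le_target : 1 ≤ t)
      (target_le : t ≤ 2 ^ (h + 1)) (one_le : 1 ≤ e) (le_pred : e ≤ j - 1) :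
      InStrip h d m n a b (.spine j (i + 1) k t e s)

/-- The set of codes between the anchors `a` and `b`, up to level `n + 1`, without the interiors
of the trees. -/
def strip (h d m n a b : ℕ) : Set Raw := {x | InStrip h d m n a b x}

lemma strip_mono {n' a' b' : ℕ} (hn : n ≤ n') (ha : a' ≤ a) (hb : b ≤ b') :
    strip h d m n a b ⊆ strip h d m n' a' b' := by
  rintro x (⟨k, hak, hkb⟩ | ⟨j, i, k, hcopy⟩ | ⟨j, i, k, t, e, s, hcopy, ht, ht', he, hej⟩)
  · exact .path k ((Nat.mul_le_mul_right _ ha).trans hak) (hkb.trans (Nat.mul_le_mul_right _ hb))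
  · exact .leaf j i k (hcopy.mono hn ha hb)
  · exact .spine j i k t e s (hcopy.mono hn ha hb) ht ht' he hej

lemma depth_of_mem_strip {x : Raw} (hx : x ∈ strip h d m n a b) : depth h x = h := by
  rcases hx with _ | _ | _
  · rfl
  · exact depth_leaf ..
  · rfl

lemma ne_spine_of_mem_strip {x : Raw} (hx : x ∈ strip h d m n a b) (i k t e s : ℕ) :
    x ≠ .spine (n + 2) i k t e s := by
  intro hxs
  rcases hx with _ | _ | ⟨_, _, _, _, _, _, hcopy⟩
  · cases hxs
  · cases canon_eq_spine_iff.1 hxs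
  · cases hxs
    have := hcopy.le_succ
    omega

lemma IsPotential.extendPotential_eq_of_mem_strip {φ : Raw → ℤ} (hφ : IsPotential h d φ)
    (hh : 0 < h) {c : ℤ} (hpath : ∀ k, a * (d + 1) ≤ k → k ≤ b * (d + 1) → φ (.path k) = c)
    (htree : ∀ j i, IsCopyOver h n a b j i → ∀ p, φ (.tree j (i + 1) p) = c)
    (hend : ∀ j i t e, IsCopyOver h n a b j i → 1 ≤ t → t ≤ 2 ^ (h + 1) → 1 ≤ e → e ≤ j - 1 →
      φ (VsetElem h d (j - 1) (i * NN h + t) e) = c)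
    {x : Raw} (hx : x ∈ strip h d m n a b) : extendPotential h d φ x = c := by
  rcases hx with ⟨k, hak, hkb⟩ | ⟨j, i, k, hcopy⟩ | ⟨j, i, k, t, e, s, hcopy, ht, ht', he, hej⟩
  · exact hpath k hak hkb
  · rw [hφ.extendPotential_leaf hh]
    exact htree j i hcopy _
  · exact extendPotential_spine_of_eq (htree j i hcopy _) (hend j i t e hcopy ht ht' he hej) s

lemma extendPotential_levelPotential_of_mem_strip (hh : 0 < h) {x : Raw}
    (hx : x ∈ strip h d m n a b) : extendPotential h d (levelPotential d (n + 2)) x = 0 := by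
  refine (isPotential_levelPotential h d (n + 2)).extendPotential_eq_of_mem_strip hh
    (fun _ _ _ => rfl) (fun j i hcopy _ => if_neg ?_)
    (fun j i t e hcopy _ _ _ hej => levelPotential_VsetElem_eq_zero hh ?_ ..) hx <;>
  · have := hcopy.le_succ
    omega

lemma extendPotential_positionPotential_of_le (hh : 0 < h) {c : ℕ} (hc : b ≤ c) {x : Raw}
    (hx : x ∈ strip h d m n a b) : extendPotential h d (positionPotential h d c) x = 0 := by
  refine (isPotential_positionPotential hh d c).extendPotential_eq_of_mem_strip hh
    (fun k _ hkb => positionPotential_path_eq_zero (hkb.trans (Nat.mul_le_mul_right _ hc)))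
    (fun j i hcopy p => positionPotential_tree_eq_zero (hcopy.le_right.trans hc) p)
    (fun j i t e hcopy _ ht he hej => ?_) hx
  rw [positionPotential_VsetElem hh he hej]
  exact if_neg ((hcopy.target_le ht).trans hc).not_gt

lemma extendPotential_positionPotential_of_lt (hh : 0 < h) {c : ℕ} (hc : c < a) {x : Raw}
    (hx : x ∈ strip h d m n a b) :
    extendPotential h d (positionPotential h d c) x = d + 1 := by
  refine (isPotential_positionPotential hh d c).extendPotential_eq_of_mem_strip hh
    (fun k hak _ => positionPotential_path_eq ((Nat.mul_le_mul_right _ hc).trans hak))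
    (fun j i hcopy p => positionPotential_tree_eq (hc.trans_le hcopy.left_le) p)
    (fun j i t e hcopy ht _ he hej => ?_) hx
  rw [positionPotential_VsetElem hh he hej]
  exact if_pos (hc.trans_le (hcopy.le_target ht))

lemma disjoint_gBall_leaf_gBall_strip (hd : 2 * l ≤ d) (hh : 2 * l < h) (i k : ℕ) :
    Disjoint (CGT.gBall (G h d m) (lift {leaf h m (n + 2) i k}) l)
      (CGT.gBall (G h d m) (lift (strip h d m n a b)) l) := by
  have hφ := isPotential_levelPotential h d (n + 2)
  refine hφ.disjoint_gBall hd hh (fun x hx => ?_) (fun x hx => ?_)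
    fun x hx => extendPotential_levelPotential_of_mem_strip (by omega) hx <;>
    rw [Set.mem_singleton_iff.1 hx]
  · exact depth_leaf ..
  · rw [hφ.extendPotential_leaf (by omega)]
    exact if_pos le_rfl

lemma disjoint_gBall_strip_gBall_strip (hd : 2 * l ≤ d) (hh : 2 * l < h) {a' b' : ℕ}
    (hab : b < a') :
    Disjoint (CGT.gBall (G h d m) (lift (strip h d m n a' b')) l)
      (CGT.gBall (G h d m) (lift (strip h d m n a b)) l) :=
  (isPotential_positionPotential (by omega) d b).disjoint_gBall hd hh
    (fun _ hx => depth_of_mem_strip hx)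
    (fun _ hx => extendPotential_positionPotential_of_lt (by omega) hab hx)
    (fun _ hx => extendPotential_positionPotential_of_le (by omega) le_rfl hx)

lemma eq_leaf_or_eq_VsetElem_of_adj_spine (hh : 0 < h) {j i k t e s : ℕ} {u v : Verts h d m}
    (hu : u.1 = .spine j i k t e s) (huv : (G h d m).Adj u v) :
    (∃ s', v.1 = .spine j i k t e s') ∨ v.1 = leaf h m j i k ∨
      v.1 = VsetElem h d (j - 1) ((i - 1) * NN h + t) e := by
  rcases (adj_iff.1 huv).2 with ⟨x, y, hxy, hux, hvy⟩ | ⟨x, y, hxy, hvx, huy⟩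
  · have hx := canon_eq_spine_iff.1 (hux.symm.trans hu)
    rw [hvy]
    cases hxy with
    | base | child | toLeaf | short => cases hx
    | step => cases hx; exact .inl ⟨_, rfl⟩
    | toV => cases hx; exact .inr (.inr (canon_VsetElem hh ..))
  · have hy := canon_eq_spine_iff.1 (huy.symm.trans hu)
    rw [hvx]
    cases hxy with
    | base | child => cases hy
    | step => cases hy; exact .inl ⟨_, rfl⟩
    | toLeaf => cases hy; exact .inr (.inl rfl)
    | toV | short => exact absurd hy VsetElem_ne_spine

lemma mem_gBall_ends_of_mem_gBall_spine (hh : 0 < h) {i k t e s : ℕ} {x : Verts h d m}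
    (hx : x ∈ CGT.gBall (G h d m) (lift (strip h d m n a b)) l)
    (hspine : x ∈ CGT.gBall (G h d m) (lift {.spine (n + 2) (i + 1) k t e s}) l) :
    x ∈ CGT.gBall (G h d m)
      (lift {leaf h m (n + 2) (i + 1) k, VsetElem h d (n + 1) (i * NN h + t) e}) l := by
  let spine : Set (Verts h d m) := {v | ∃ s, v.1 = .spine (n + 2) (i + 1) k t e s}
  refine CGT.gBall_inter_gBall_compl_subset (S := spine)
    (fun u ⟨s, hu⟩ v huv => eq_leaf_or_eq_VsetElem_of_adj_spine hh hu huv) l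
    ⟨CGT.gBall_mono (fun v hv => ?_) l hspine, CGT.gBall_mono ?_ l hx⟩
  · exact ⟨s, hv⟩
  · rintro v hv ⟨s', hs'⟩
    exact ne_spine_of_mem_strip hv _ _ _ _ _ hs'

end Strips

section Joining

variable {h d m : ℕ} {C : Set (Verts h d m)} {x y z : Raw} {U W : Set Raw}

/-- The vertices with codes `x` and `y` are joined by a walk inside `C`. -/
def Joined (C : Set (Verts h d m)) (x y : Raw) : Prop :=
  ∃ u v : Verts h d m, u.1 = x ∧ v.1 = y ∧ ∃ p : (G h d m).Walk u v, ∀ w ∈ p.support, w ∈ C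

namespace Joined

lemma refl (hx : x ∈ Subtype.val '' C) : Joined C x x := by
  obtain ⟨u, hu, rfl⟩ := hx
  exact ⟨u, u, rfl, rfl, .nil, by simpa using hu⟩

lemma symm : Joined C x y → Joined C y x := by
  rintro ⟨u, v, hu, hv, p, hp⟩
  exact ⟨v, u, hv, hu, p.reverse, by simpa using hp⟩

lemma trans : Joined C x y → Joined C y z → Joined C x z := by
  rintro ⟨u, v, hu, hv, p, hp⟩ ⟨v', w, hv', hw, q, hq⟩
  obtain rfl := Subtype.ext (hv.trans hv'.symm)
  exact ⟨u, w, hu, hw, p.append q, fun a ha =>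
    ((p.mem_support_append_iff q).1 ha).elim (hp a) (hq a)⟩

lemma mem_right : Joined C x y → y ∈ Subtype.val '' C := by
  rintro ⟨u, v, -, hv, p, hp⟩
  exact ⟨v, hp v p.end_mem_support, hv⟩

lemma of_rel (hxy : rel h d m x y) (hx : x ∈ Subtype.val '' C) (hy : y ∈ Subtype.val '' C) :
    Joined C x y := by
  rcases eq_or_ne x y with rfl | hne
  · exact refl hx
  · obtain ⟨u, hu, rfl⟩ := hx
    obtain ⟨v, hv, rfl⟩ := hy
    exact ⟨u, v, rfl, rfl, (adj_iff.2 ⟨hne, .inl hxy⟩).toWalk, by simp [hu, hv]⟩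

lemma of_forall_rel_succ {f : ℕ → Raw} (hf : ∀ s, rel h d m (f s) (f (s + 1))) {a b : ℕ}
    (hab : a ≤ b) (hC : ∀ s, a ≤ s → s ≤ b → f s ∈ Subtype.val '' C) : Joined C (f a) (f b) := by
  induction b, hab using Nat.le_induction with
  | base => exact refl (hC a le_rfl le_rfl)
  | succ b hab ih =>
    exact (ih fun s has hsb => hC s has (by omega)).trans
      (of_rel (hf b) (hC b hab (by omega)) (hC _ (by omega) le_rfl))

end Joined

lemma rel_of_rawAdj (hxy : rawAdj h d x y) : rel h d m (canon h m x) (canon h m y) :=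
  ⟨x, y, hxy, rfl, rfl⟩

lemma joined_leaf_VsetElem (hh : 0 < h) {j i k t e : ℕ} (hkt : IsSpinePair h k t) (he : 1 ≤ e)
    (hej : e ≤ j - 1) (hleaf : leaf h m j i k ∈ Subtype.val '' C)
    (hspine : ∀ s, 1 ≤ s → s ≤ d → .spine j i k t e s ∈ Subtype.val '' C)
    (hend : VsetElem h d (j - 1) ((i - 1) * NN h + t) e ∈ Subtype.val '' C) :
    Joined C (leaf h m j i k) (VsetElem h d (j - 1) ((i - 1) * NN h + t) e) := by
  rcases d.eq_zero_or_pos with rfl | hd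
  · have hshort := rel_of_rawAdj (m := m) (rawAdj.short j i k t e rfl hkt.one_le_leaf hkt.leaf_le
      hkt.target_eq hkt.one_le_target hkt.target_le he hej)
    rw [canon_VsetElem hh] at hshort
    exact .of_rel hshort hleaf hend
  · have hfirst := hspine 1 le_rfl hd
    have hlast := hspine d hd le_rfl
    have htoV := rel_of_rawAdj (m := m) (rawAdj.toV (h := h) (d := d) j i k t e)
    rw [canon_VsetElem hh] at htoV
    exact ((Joined.of_rel (rel_of_rawAdj (.toLeaf j i k t e)) hleaf hfirst).trans
      (.of_forall_rel_succ (fun s => rel_of_rawAdj (.step j i k t e s)) hd hspine)).trans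
      (.of_rel htoV hlast hend)

/-- Some vertex with code in `U` is joined to some vertex with code in `W` by a walk inside `C`. -/
def SetJoined (C : Set (Verts h d m)) (U W : Set Raw) : Prop :=
  ∃ x ∈ U, ∃ y ∈ W, Joined C x y

namespace SetJoined

lemma symm : SetJoined C U W → SetJoined C W U :=
  fun ⟨x, hx, y, hy, hxy⟩ => ⟨y, hy, x, hx, hxy.symm⟩

lemma mono {U' W' : Set Raw} (hU : U ⊆ U') (hW : W ⊆ W') : SetJoined C U W → SetJoined C U' W' :=
  fun ⟨x, hx, y, hy, hxy⟩ => ⟨x, hU hx, y, hW hy, hxy⟩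

lemma trans_of_forall {y : Raw} (hUW : SetJoined C U W)
    (hy : ∀ w ∈ W, w ∈ Subtype.val '' C → Joined C w y) : SetJoined C U {y} :=
  let ⟨x, hx, w, hw, hxw⟩ := hUW
  ⟨x, hx, y, rfl, hxw.trans (hy w hw hxw.mem_right)⟩

lemma trans_singleton : SetJoined C U {y} → SetJoined C {y} W → SetJoined C U W := by
  rintro ⟨x, hx, _, rfl, hxy⟩ ⟨_, rfl, z, hz, hyz⟩
  exact ⟨x, hx, z, hz, hxy.trans hyz⟩

end SetJoined

end Joining

section Clearance

variable {h d m n l a b : ℕ} {X : Set (Verts h d m)}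

/-- The vertices at distance more than `l` from `X` and from the root. -/
def clearSet (l : ℕ) (X : Set (Verts h d m)) : Set (Verts h d m) :=
  (CGT.gBall (G h d m) (X ∪ lift {RootR m}) l)ᶜ

/-- The elements of `X` at distance at most `l` from a strip. -/
def hitters (l : ℕ) (X : Set (Verts h d m)) (n a b : ℕ) : Set (Verts h d m) :=
  X ∩ CGT.gBall (G h d m) (lift (strip h d m n a b)) l

lemma hitters_mono {n' a' b' : ℕ} (hn : n ≤ n') (ha : a' ≤ a) (hb : b ≤ b') :
    hitters l X n a b ⊆ hitters l X n' a' b' :=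
  Set.inter_subset_inter_right X (CGT.gBall_mono (Set.preimage_mono (strip_mono hn ha hb)) l)

lemma finite_hitters (hX : X.Finite) (l n a b : ℕ) : (hitters l X n a b).Finite :=
  hX.subset Set.inter_subset_left

lemma mem_image_clearSet_of_mem_strip (hl : l < h) {x : Raw} (hvalid : Valid h d m x)
    (hx : x ∈ strip h d m n a b)
    (hhit : ∀ y ∈ hitters l X n a b, y ∉ CGT.gBall (G h d m) (lift {x}) l) :
    x ∈ Subtype.val '' clearSet l X := by
  refine ⟨⟨x, hvalid⟩, ?_, rfl⟩
  rintro ⟨y, hy | hroot, hyx⟩ <;> rw [edist_comm] at hyx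
  · exact hhit y ⟨hy, ⟨x, hvalid⟩, hx, hyx⟩ ⟨⟨x, hvalid⟩, rfl, hyx⟩
  · obtain ⟨p, hp⟩ := CGT.exists_walk_length_le_of_edist_le hyx
    have hdepth := depth_le_add_length (by omega) p
    have hroot : y.1 = RootR m := hroot
    rw [depth_of_mem_strip hx, hroot] at hdepth
    simp only [RootR, depth, List.length_nil] at hdepth
    omega

lemma leaf_mem_clearSet (hd : 2 * l ≤ d) (hh : 2 * l < h)
    (hsub : hitters l X (n + 1) a b ⊆ hitters l X n a b) (hm : n + 2 ≤ m)
    (hb : b ≤ NN h ^ (m - 1)) {i : ℕ} (hcopy : IsCopyOver h (n + 1) a b (n + 2) i) (k : ℕ) :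
    leaf h m (n + 2) (i + 1) k ∈ Subtype.val '' clearSet l X :=
  mem_image_clearSet_of_mem_strip (by omega)
    (valid_leaf (by omega) (by omega) hm (hcopy.lt_pow hm hb) k) (.leaf _ i k hcopy)
    fun _ hy hyleaf =>
      Set.disjoint_left.1 (disjoint_gBall_leaf_gBall_strip hd hh (i + 1) k) hyleaf (hsub hy).2

lemma spine_mem_clearSet (hd : 2 * l ≤ d) (hh : 2 * l < h)
    (hsub : hitters l X (n + 1) a b ⊆ hitters l X n a b) (hm : n + 2 ≤ m)
    (hb : b ≤ NN h ^ (m - 1)) {i k t e s : ℕ} (hcopy : IsCopyOver h (n + 1) a b (n + 2) i)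
    (hkt : IsSpinePair h k t) (he : 1 ≤ e) (hen : e ≤ n + 1) (hs : 1 ≤ s) (hsd : s ≤ d)
    (hend : VsetElem h d (n + 1) (i * NN h + t) e ∈ Subtype.val '' clearSet l X) :
    .spine (n + 2) (i + 1) k t e s ∈ Subtype.val '' clearSet l X := by
  have hvalid : Valid h d m (.spine (n + 2) (i + 1) k t e s) :=
    ⟨by omega, hm, by omega, hcopy.lt_pow hm hb, hkt.one_le_leaf, hkt.leaf_le, hkt.target_eq,
      hkt.one_le_target, hkt.target_le, he, hen, hs, hsd⟩
  refine mem_image_clearSet_of_mem_strip (by omega) hvalid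
    (.spine _ i k t e s hcopy hkt.one_le_target hkt.target_le he hen) fun y hy hyspine => ?_
  obtain ⟨u, huleaf | huend, huy⟩ :=
    mem_gBall_ends_of_mem_gBall_spine (by omega) (hsub hy).2 hyspine
  · exact Set.disjoint_left.1 (disjoint_gBall_leaf_gBall_strip hd hh (i + 1) k)
      ⟨u, huleaf, huy⟩ (hsub hy).2
  · obtain ⟨v, hv, hvend⟩ := hend
    obtain rfl := Subtype.ext (hvend.trans huend.symm)
    exact hv ⟨y, .inl hy.1, edist_comm.trans_le huy⟩

lemma joined_leaf_of_mem_VsetRaw (hd : 2 * l ≤ d) (hh : 2 * l < h)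
    (hsub : hitters l X (n + 1) a b ⊆ hitters l X n a b) (hm : n + 2 ≤ m)
    (hb : b ≤ NN h ^ (m - 1)) {i k t : ℕ} (hcopy : IsCopyOver h (n + 1) a b (n + 2) i)
    (hkt : IsSpinePair h k t) {y : Raw} (hy : y ∈ VsetRaw h d m (n + 1) (i * NN h + t))
    (hclear : y ∈ Subtype.val '' clearSet l X) :
    Joined (clearSet l X) y (leaf h m (n + 2) (i + 1) k) := by
  obtain ⟨e, he, hen, rfl⟩ := (mem_VsetRaw (by omega)).1 hy
  exact (joined_leaf_VsetElem (by omega) hkt he hen (leaf_mem_clearSet hd hh hsub hm hb hcopy k)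
    (fun s hs hsd => spine_mem_clearSet hd hh hsub hm hb hcopy hkt he hen hs hsd hclear)
    hclear).symm

lemma hitters_eq_empty_of_ncard_le (hd : 2 * l ≤ d) (hh : 2 * l < h) (hX : X.Finite) {c c' : ℕ}
    (hac : a ≤ c') (hcb : c ≤ b) (hcc : c < c')
    (hcard : (hitters l X n a b).ncard ≤ (hitters l X n a c).ncard) :
    hitters l X n c' b = ∅ := by
  have heq : hitters l X n a c = hitters l X n a b :=
    Set.eq_of_subset_of_ncard_le (hitters_mono le_rfl le_rfl hcb) hcard (finite_hitters hX ..)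
  refine Set.eq_empty_of_forall_notMem fun x hx => ?_
  have hleft : x ∈ hitters l X n a c := heq ▸ hitters_mono le_rfl hac le_rfl hx
  exact Set.disjoint_left.1 (disjoint_gBall_strip_gBall_strip hd hh hcc) hx.2 hleft.2

end Clearance

section Crossing

variable {h d m n l : ℕ} {X : Set (Verts h d m)}

/-- The code `L` is a leaf with spines to the gluing set `V_g^{j-1}`, in one of the trees at
level `j` numbered `A + 1` to `B`. -/
def IsAttached (h m j A B : ℕ) (L : Raw) (g : ℕ) : Prop :=
  ∃ i k t, A ≤ i ∧ i < B ∧ IsSpinePair h k t ∧ L = leaf h m j (i + 1) k ∧ g = i * NN h + t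

lemma leaf_eq_or_exists_isAttached_left (hh : 0 < h) (m j : ℕ) {A B i r k : ℕ} (hA : A ≤ i)
    (hB : i < B) (hk : 1 ≤ k) (hkh : k ≤ 2 ^ h) (hkr : 2 * k ≤ r + 3) :
    leaf h m j (i + 1) k = leaf h m j (A + 1) 1 ∨
      ∃ a, A * NN h < a ∧ a ≤ i * NN h + r ∧
        IsAttached h m j A B (leaf h m j (i + 1) k) (a + 1) := by
  have hN := NN_add_one h
  have h2h : 2 ≤ 2 ^ h := Nat.le_self_pow hh.ne' 2
  rcases hk.eq_or_lt with rfl | hk1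
  · rcases hA.eq_or_lt with rfl | hlt
    · exact .inl rfl
    · -- `ℓ_1` of this tree is `ℓ_{2^h}` of the previous one, whose left spines end in its copy.
      obtain ⟨i, rfl⟩ : ∃ i', i = i' + 1 := Nat.exists_eq_add_one.2 (Nat.zero_lt_of_lt hlt)
      have hAi := Nat.mul_le_mul_right (NN h) (Nat.le_of_lt_succ hlt)
      have hsucc := add_one_mul i (NN h)
      exact .inr ⟨i * NN h + (2 * 2 ^ h - 3), by omega, by omega, i, 2 ^ h, 2 * 2 ^ h - 2,
        by omega, by omega, ⟨by omega, le_rfl, .inl rfl, by omega, by omega⟩,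
        leaf_succ_one hh i.succ_pos m j, by omega⟩
  · have hAi := Nat.mul_le_mul_right (NN h) hA
    exact .inr ⟨i * NN h + (2 * k - 3), by omega, by omega, i, k, 2 * k - 2, hA, hB,
      ⟨hk, hkh, .inl rfl, by omega, by omega⟩, rfl, by omega⟩

lemma leaf_eq_or_exists_isAttached_right (hh : 0 < h) (m j : ℕ) {A B i r k : ℕ} (hA : A ≤ i)
    (hB : i < B) (hk : 1 ≤ k) (hkh : k ≤ 2 ^ h) (hrk : r + 2 ≤ 2 * k) :
    leaf h m j (i + 1) k = leaf h m j (B + 1) 1 ∨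
      ∃ b, i * NN h + r + 2 ≤ b ∧ b < B * NN h ∧
        IsAttached h m j A B (leaf h m j (i + 1) k) (b + 1) := by
  have hN := NN_add_one h
  have h2h : 2 ≤ 2 ^ h := Nat.le_self_pow hh.ne' 2
  have hsucc := add_one_mul i (NN h)
  rcases hkh.eq_or_lt with rfl | hklt
  · rw [← leaf_succ_one hh i.succ_pos]
    rcases (Nat.succ_le_of_lt hB).eq_or_lt with rfl | hlt
    · exact .inl rfl
    · have hiB : (i + 1) * NN h + NN h ≤ B * NN h := by
        rw [← add_one_mul]
        exact Nat.mul_le_mul_right _ hlt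
      exact .inr ⟨(i + 1) * NN h + 2, by omega, by omega, i + 1, 1, 3, by omega, hlt,
        ⟨le_rfl, hk, .inr rfl, by omega, by omega⟩, rfl, rfl⟩
  · have hiB : (i + 1) * NN h ≤ B * NN h := Nat.mul_le_mul_right _ hB
    exact .inr ⟨i * NN h + 2 * k, by omega, by omega, i, k, 2 * k + 1, hA, hB,
      ⟨hk, hkh, .inr rfl, by omega, by omega⟩, rfl, rfl⟩

lemma exists_leaf_bridging (hh : 0 < h) (m j : ℕ) {A B g : ℕ} (hA : A * NN h ≤ g)
    (hB : g < B * NN h) :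
    ∃ i k, A ≤ i ∧ i < B ∧
      (leaf h m j (i + 1) k = leaf h m j (A + 1) 1 ∨
        ∃ a, A * NN h < a ∧ a ≤ g ∧ IsAttached h m j A B (leaf h m j (i + 1) k) (a + 1)) ∧
      (leaf h m j (i + 1) k = leaf h m j (B + 1) 1 ∨
        ∃ b, g + 2 ≤ b ∧ b < B * NN h ∧
          IsAttached h m j A B (leaf h m j (i + 1) k) (b + 1)) := by
  have hN := NN_add_one h
  have hmod := Nat.mod_lt g (NN_pos h)
  have hAi : A ≤ g / NN h := (Nat.le_div_iff_mul_le (NN_pos h)).2 hA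
  have hiB : g / NN h < B := (Nat.div_lt_iff_lt_mul (NN_pos h)).2 hB
  have hg : g / NN h * NN h + g % NN h = g := Nat.div_add_mod' g (NN h)
  -- The spines of `ℓ_k` end in `V_{2k-2}` and `V_{2k+1}`, so they bridge the local copies from
  -- `2k - 2` to `2k`, among which are `g % NN h + 1` and its successor.
  have hleft := leaf_eq_or_exists_isAttached_left hh m j (r := g % NN h)
    (k := (g % NN h + 3) / 2) hAi hiB (by omega) (by omega) (by omega)
  have hright := leaf_eq_or_exists_isAttached_right hh m j (r := g % NN h)
    (k := (g % NN h + 3) / 2) hAi hiB (by omega) (by omega) (by omega)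
  rw [hg] at hleft hright
  exact ⟨_, _, hAi, hiB, hleft, hright⟩

lemma mul_NN_pow_succ (h A n : ℕ) : A * NN h ^ (n + 1) = A * NN h * NN h ^ n := by
  rw [pow_succ', mul_assoc]

lemma mul_NN_le_pow (hm : n + 2 ≤ m) {B : ℕ} (hB : B ≤ NN h ^ (m - (n + 2))) :
    B * NN h ≤ NN h ^ (m - (n + 1)) := by
  rw [show m - (n + 1) = m - (n + 2) + 1 by omega, pow_succ]
  exact Nat.mul_le_mul_right _ hB

lemma mul_NN_pow_le_pow (hm : n + 2 ≤ m) {B : ℕ} (hB : B ≤ NN h ^ (m - (n + 2))) :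
    B * NN h ^ (n + 1) ≤ NN h ^ (m - 1) := by
  rw [show m - 1 = m - (n + 2) + (n + 1) by omega, pow_add (NN h) (m - (n + 2))]
  exact Nat.mul_le_mul_right _ hB

lemma exists_first_succ {P : ℕ → Prop} {a b : ℕ} (hab : a < b) (hb : P b) :
    ∃ g, a ≤ g ∧ g < b ∧ P (g + 1) ∧ ∀ c, a < c → c ≤ g → ¬ P c := by
  classical
  have hex : ∃ c, a < c ∧ P c := ⟨b, hab, hb⟩
  obtain ⟨hlt, hP⟩ := Nat.find_spec hex
  have hle := Nat.find_min' hex ⟨hab, hb⟩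
  obtain ⟨g, hg⟩ : ∃ g, Nat.find hex = g + 1 :=
    Nat.exists_eq_add_one.2 (Nat.zero_lt_of_lt hlt)
  have hmin : ∀ c, c < g + 1 → ¬ (a < c ∧ P c) := fun c hc => Nat.find_min hex (hg ▸ hc)
  rw [hg] at hlt hP hle
  exact ⟨g, by omega, by omega, hP, fun c hac hcg hc => hmin c (by omega) ⟨hac, hc⟩⟩

/-- In `G_{h,d,m}`, every run of consecutive copies of `G_{h,d,n+1}` with at most `n` elements of
`X` close to it can be crossed inside `clearSet l X`. -/
def Crossable (l : ℕ) (X : Set (Verts h d m)) (n : ℕ) : Prop :=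
  ∀ A B, A < B → B ≤ NN h ^ (m - (n + 1)) →
    (hitters l X n (A * NN h ^ n) (B * NN h ^ n)).ncard < n + 1 →
    SetJoined (clearSet l X) (VsetRaw h d m (n + 1) (A + 1)) (VsetRaw h d m (n + 1) (B + 1))

lemma crossable_zero (hh : l < h) (hX : X.Finite) : Crossable l X 0 := by
  intro A B hAB hB hcard
  rw [pow_zero, mul_one, mul_one, Nat.lt_one_iff, Set.ncard_eq_zero (finite_hitters hX ..)] at hcard
  have hanchor : ∀ g, .path (g * (d + 1)) ∈ VsetRaw h d m 1 (g + 1) := fun g =>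
    (mem_VsetRaw (by omega)).2 ⟨1, le_rfl, le_rfl, by simp [VsetElem_one]⟩
  refine ⟨_, hanchor A, _, hanchor B, .of_forall_rel_succ (f := .path)
    (fun k => rel_of_rawAdj (.base k)) (Nat.mul_le_mul_right _ hAB.le) fun k hAk hkB => ?_⟩
  refine mem_image_clearSet_of_mem_strip (n := 0) (a := A) (b := B) hh ?_ (.path k hAk hkB)
    (by simp [hcard])
  calc k ≤ B * (d + 1) := hkB
    _ ≤ (d + 1) * NN h ^ (m - 1) := by
      rw [mul_comm]
      exact Nat.mul_le_mul_left _ hB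

lemma setJoined_leaf_of_isAttached (hd : 2 * l ≤ d) (hh : 2 * l < h) (hm : n + 2 ≤ m) {A B : ℕ}
    (hB : B * NN h ^ (n + 1) ≤ NN h ^ (m - 1))
    (hsub : hitters l X (n + 1) (A * NN h ^ (n + 1)) (B * NN h ^ (n + 1)) ⊆
      hitters l X n (A * NN h ^ (n + 1)) (B * NN h ^ (n + 1)))
    {L : Raw} {g : ℕ} (hL : IsAttached h m (n + 2) A B L g) {U : Set Raw}
    (hU : SetJoined (clearSet l X) U (VsetRaw h d m (n + 1) g)) :
    SetJoined (clearSet l X) U {L} := by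
  obtain ⟨i, k, t, hAi, hiB, hkt, rfl, rfl⟩ := hL
  exact hU.trans_of_forall fun y hy hclear =>
    joined_leaf_of_mem_VsetRaw hd hh hsub hm hB (isCopyOver_top hAi hiB) hkt hy hclear

lemma Crossable.setJoined_of_hitters_subset (hcross : Crossable l X n) (hd : 2 * l ≤ d)
    (hh : 2 * l < h) (hX : X.Finite) (hm : n + 2 ≤ m) {A B : ℕ} (hAB : A < B)
    (hB : B ≤ NN h ^ (m - (n + 2)))
    (hsub : hitters l X (n + 1) (A * NN h ^ (n + 1)) (B * NN h ^ (n + 1)) ⊆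
      hitters l X n (A * NN h ^ (n + 1)) (B * NN h ^ (n + 1)))
    (hcard : (hitters l X n (A * NN h ^ (n + 1)) (B * NN h ^ (n + 1))).ncard = n + 1) :
    SetJoined (clearSet l X) (VsetRaw h d m (n + 2) (A + 1)) (VsetRaw h d m (n + 2) (B + 1)) := by
  have hANB : A * NN h < B * NN h := Nat.mul_lt_mul_of_pos_right hAB (NN_pos h)
  have hBpow := mul_NN_pow_le_pow hm hB
  have hBN := mul_NN_le_pow hm hB
  have hAeq := mul_NN_pow_succ h A n
  have hBeq := mul_NN_pow_succ h B n
  obtain ⟨g, hAg, hgB, hfull, hfirst⟩ := exists_first_succ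
    (P := fun c => n + 1 ≤ (hitters l X n (A * NN h ^ (n + 1)) (c * NN h ^ n)).ncard) hANB
    (by rw [← hBeq, hcard])
  obtain ⟨i, k, hAi, hiB, hleft, hright⟩ :=
    exists_leaf_bridging (by omega : 0 < h) m (n + 2) hAg hgB
  have hleaf := leaf_mem_clearSet hd hh hsub hm hBpow (isCopyOver_top hAi hiB) k
  rw [VsetRaw_succ_level (by omega) d m n A, VsetRaw_succ_level (by omega) d m n B]
  refine SetJoined.trans_singleton (y := leaf h m (n + 2) (i + 1) k) ?_ ?_
  · rcases hleft with hleft | ⟨a, hAa, hag, hatt⟩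
    · exact ⟨_, .inr hleft, _, rfl, .refl hleaf⟩
    · refine setJoined_leaf_of_isAttached hd hh hm hBpow hsub hatt ?_
      refine (hcross (A * NN h) a hAa (by omega) ?_).mono Set.subset_union_left subset_rfl
      rw [← hAeq]
      exact not_le.1 (hfirst a hAa hag)
  · rcases hright with hright | ⟨b, hgb, hbB, hatt⟩
    · exact ⟨_, rfl, _, .inr hright, .refl hleaf⟩
    · refine (setJoined_leaf_of_isAttached hd hh hm hBpow hsub hatt ?_).symm
      refine (hcross b (B * NN h) hbB hBN ?_).symm.mono Set.subset_union_left subset_rfl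
      rw [← hBeq, hitters_eq_empty_of_ncard_le hd hh hX (c := (g + 1) * NN h ^ n)
        (a := A * NN h ^ (n + 1))]
      · simp
      · rw [hAeq]; gcongr; omega
      · rw [hBeq]; gcongr; omega
      · exact Nat.mul_lt_mul_of_pos_right (by omega) (Nat.pow_pos (NN_pos h))
      · rwa [hcard]

lemma Crossable.succ (hcross : Crossable l X n) (hd : 2 * l ≤ d) (hh : 2 * l < h) (hX : X.Finite)
    (hm : n + 2 ≤ m) : Crossable l X (n + 1) := by
  intro A B hAB hB hcard
  by_cases hfew : (hitters l X n (A * NN h ^ (n + 1)) (B * NN h ^ (n + 1))).ncard < n + 1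
  · rw [mul_NN_pow_succ, mul_NN_pow_succ] at hfew
    rw [VsetRaw_succ_level (by omega), VsetRaw_succ_level (by omega)]
    exact (hcross _ _ (Nat.mul_lt_mul_of_pos_right hAB (NN_pos h)) (mul_NN_le_pow hm hB) hfew).mono
      Set.subset_union_left Set.subset_union_left
  · have hsubset : hitters l X n (A * NN h ^ (n + 1)) (B * NN h ^ (n + 1)) ⊆
        hitters l X (n + 1) (A * NN h ^ (n + 1)) (B * NN h ^ (n + 1)) :=
      hitters_mono n.le_succ le_rfl le_rfl
    have hle := Set.ncard_le_ncard hsubset (finite_hitters hX ..)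
    have heq := Set.eq_of_subset_of_ncard_le hsubset (by omega) (finite_hitters hX ..)
    exact hcross.setJoined_of_hitters_subset hd hh hX hm hAB hB heq.ge (by omega)

lemma crossable (hd : 2 * l ≤ d) (hh : 2 * l < h) (hX : X.Finite) (hm : n < m) :
    Crossable l X n := by
  induction n with
  | zero => exact crossable_zero (by omega) hX
  | succ n ih => exact (ih (by omega)).succ hd hh hX hm

end Crossing

end Ghdm

/-- for `d ≥ 2ℓ`, `h ≥ 2ℓ+2`, `m ≥ 2` and any set `X` of fewer than `m`
vertices of `G_{h,d,m}`, there is an `S(G)`–`T(G)` path `P` with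
`d_G(V(P), X ∪ {R(G)}) > ℓ`. -/
theorem statement9 (l h d m : ℕ) (hd : 2 * l ≤ d) (hh : 2 * l + 2 ≤ h) (hm : 2 ≤ m)
    (X : Set (Ghdm.Verts h d m)) (hXfin : X.Finite) (hX : X.ncard < m) :
    ∃ s t : Ghdm.Verts h d m, s.1 ∈ Ghdm.SsetR h d m ∧ t.1 ∈ Ghdm.TsetR h d m ∧
      ∃ P : (Ghdm.G h d m).Walk s t, P.IsPath ∧
        (l : ℕ∞) < CGT.sDist (Ghdm.G h d m) (CGT.walkSupp P)
          (X ∪ Ghdm.lift {Ghdm.RootR m}) := by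
  obtain ⟨n, rfl⟩ : ∃ n, m = n + 2 := Nat.exists_eq_add_of_le' hm
  have hcard : (Ghdm.hitters l X (n + 1) (0 * Ghdm.NN h ^ (n + 1))
      (1 * Ghdm.NN h ^ (n + 1))).ncard < n + 2 :=
    (Set.ncard_le_ncard Set.inter_subset_left hXfin).trans_lt hX
  obtain ⟨_, hs, _, ht, s, t, rfl, rfl, P, hP⟩ :=
    Ghdm.crossable hd (by omega) hXfin (Nat.lt_succ_self (n + 1)) 0 1 one_pos (by simp) hcard
  rw [Ghdm.SsetR_eq_VsetRaw (by omega), Ghdm.TsetR_eq_VsetRaw (by omega)]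
  classical
  refine ⟨s, t, hs, ht, P.bypass, P.bypass_isPath, ?_⟩
  rw [CGT.natCast_lt_sDist_iff_disjoint_gBall, Set.disjoint_left]
  exact fun v hv => hP v (P.support_bypass_subset_support hv)
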